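/- Let F be a formal group law over a commutative ring R. Then in R⟦z0^{±1},z1^{±1},z2^{±1}⟧ one has i_{z1,z0} z2^{-1}δ_F(F(z1,ι z0)/z2) = i_{z2,z0} z1^{-1}δ_F(F(z0,z2)/z1), where i_{z1,z0} z2^{-1}δ_F(F(z1,ι z0)/z2) denotes the bilateral series obtained from z2^{-1}δ_F(w/z2) by substituting w^{±1} ↦ i_{z1,z0}F(z1,ι z0)^{±1} (integer powers of F(z1,ι z0) expanded in R((z1))⟦z0⟧), and i_{z2,z0} z1^{-1}δ_F(F(z0,z2)/z1) is obtained from z1^{-1}δ_F(w/z1) by substituting w^{±1} ↦ i_{z2,z0}F(z0,z2)^{±1} (integer powers of F(z0,z2) expanded in R((z2))⟦z0⟧). -/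

import Mathlib

/-!
Coefficient-wise formal calculus for vertex `F`-algebras, following
M. Upmeier, "Vertex F-Algebras and Their Associated Lie Algebra".

Series in one, two or three variables are represented by their coefficient
functions `ℤ → R`, `ℤ → ℤ → R`, …; products are given by coefficient-wise
(finite) sums, expressed via `finsum` (`∑ᶠ`).
-/

open scoped BigOperators

noncomputable section

/-- Generalized binomial coefficient `C(n,k) = n(n-1)⋯(n-k+1)/k!` for `n : ℤ`, `k : ℕ`. -/
def zbinom (n : ℤ) (k : ℕ) : ℤ :=
  if 0 ≤ n then (n.toNat.choose k : ℤ)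
  else (-1 : ℤ) ^ k * (((k : ℤ) - n - 1).toNat.choose k : ℤ)

/-- `C(n,m)` for integer `m`, with `C(n,m) = 0` for `m < 0`. -/
def zbinomZ (n m : ℤ) : ℤ := if m < 0 then 0 else zbinom n m.toNat

/-- `(-1)^n` for `n : ℤ`. -/
def msign (n : ℤ) : ℤ := if Even n then 1 else -1

section Series

variable {R : Type*} [CommRing R] {M : Type*} [AddCommGroup M] [Module R M]

/-- Product of a one-variable series with `R`-coefficients with an `M`-valued one. -/
def mulS (f : ℤ → R) (g : ℤ → M) : ℤ → M := fun n => ∑ᶠ i : ℤ, f i • g (n - i)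

/-- The constant series `1` (one variable). -/
def oneS (R : Type*) [CommRing R] : ℤ → R := fun n => if n = 0 then 1 else 0

/-- Natural powers of a one-variable series. -/
def pow1 (f : ℤ → R) : ℕ → ℤ → R
  | 0 => oneS R
  | k + 1 => mulS f (pow1 f k)

/-- Product of two-variable series. -/
def mulS2 (f : ℤ → ℤ → R) (g : ℤ → ℤ → M) : ℤ → ℤ → M :=
  fun a b => ∑ᶠ p : ℤ × ℤ, f p.1 p.2 • g (a - p.1) (b - p.2)

/-- The constant series `1` (two variables). -/
def oneS2 (R : Type*) [CommRing R] : ℤ → ℤ → R := fun a b => if a = 0 ∧ b = 0 then 1 else 0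

/-- Natural powers of a two-variable series. -/
def pow2 (f : ℤ → ℤ → R) : ℕ → ℤ → ℤ → R
  | 0 => oneS2 R
  | k + 1 => mulS2 f (pow2 f k)

/-- `f ∈ M((z))`: only finitely many negative powers. -/
def IsLaurent (f : ℤ → M) : Prop := ∃ N : ℤ, ∀ n : ℤ, n < N → f n = 0

/-- `f ∈ M((z,w))`: only finitely many nonzero coefficients with some negative index. -/
def IsLaurent2 (f : ℤ → ℤ → M) : Prop :=
  {p : ℤ × ℤ | (p.1 < 0 ∨ p.2 < 0) ∧ f p.1 p.2 ≠ 0}.Finite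

/-- Formal derivative of a one-variable series. -/
def fderiv1 (f : ℤ → R) : ℤ → R := fun n => ((n + 1 : ℤ) : R) * f (n + 1)

/-- The polynomial `z - w` as a two-variable series. -/
def zmw (R : Type*) [CommRing R] : ℤ → ℤ → R :=
  fun i j => if i = 1 ∧ j = 0 then 1 else if i = 0 ∧ j = 1 then -1 else 0

/-- `∂/∂w` of a two-variable series. -/
def d01 (f : ℤ → ℤ → R) : ℤ → ℤ → R := fun i j => ((j + 1 : ℤ) : R) * f i (j + 1)

/-- `∂/∂z` of a two-variable series. -/
def d10 (f : ℤ → ℤ → R) : ℤ → ℤ → R := fun i j => ((i + 1 : ℤ) : R) * f (i + 1) j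

/-- Substitution `p(f(z,w))` of a two-variable series (zero constant term) into a
one-variable power series `p`. -/
def comp2 (p : ℤ → R) (f : ℤ → ℤ → R) : ℤ → ℤ → R :=
  fun a b => ∑ᶠ m : ℕ, p (m : ℤ) * pow2 f m a b

/-- Substitution `p(f(z))` of a one-variable series (zero constant term) into a
one-variable power series `p`. -/
def comp1 (p : ℤ → R) (f : ℤ → R) : ℤ → R :=
  fun a => ∑ᶠ m : ℕ, p (m : ℤ) * pow1 f m a

/-- `(G - z)/z` for `G ≡ z (mod w)`. -/
def hzS (G : ℤ → ℤ → R) : ℤ → ℤ → R := fun i j => G (i + 1) j - oneS2 R i j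

/-- Integer powers `i_{z,w} G^n`, for `G ≡ z (mod w)`, expanded in `R((z))⟦w⟧`:
the Newton expansion `z^n ∑_k C(n,k) ((G-z)/z)^k`. -/
def izwPow (G : ℤ → ℤ → R) (n : ℤ) : ℤ → ℤ → R :=
  fun a b => ∑ᶠ k : ℕ, (zbinom n k : R) * pow2 (hzS G) k (a - n) b

/-- `(G - w)/w` for `G ≡ w (mod z)`. -/
def hwS (G : ℤ → ℤ → R) : ℤ → ℤ → R := fun i j => G i (j + 1) - oneS2 R i j

/-- Integer powers `i_{w,z} G^n`, for `G ≡ w (mod z)`, expanded in `R((w))⟦z⟧`. -/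
def iwzPow (G : ℤ → ℤ → R) (n : ℤ) : ℤ → ℤ → R :=
  fun a b => ∑ᶠ k : ℕ, (zbinom n k : R) * pow2 (hwS G) k a (b - n)

/-- `(G + w)/(-w)` for `G ≡ ι(w) (mod z)`. -/
def hwNegS (G : ℤ → ℤ → R) : ℤ → ℤ → R := fun i j => -G i (j + 1) - oneS2 R i j

/-- Integer powers `i_{w,z} G^n`, for `G ≡ -w(1+⋯) (mod z)` (e.g. `G = F(z, ι w)`),
expanded in `R((w))⟦z⟧`. -/
def iwzPowNeg (G : ℤ → ℤ → R) (n : ℤ) : ℤ → ℤ → R :=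
  fun a b => (msign n : R) * ∑ᶠ k : ℕ, (zbinom n k : R) * pow2 (hwNegS G) k a (b - n)

/-- `(f + z)/(-z)` for a series `f = -z(1 + ⋯)` such as `ι(z)`. -/
def hS (f : ℤ → R) : ℤ → R := fun j => -f (j + 1) - oneS R j

/-- Integer powers `f(z)^n` (`n : ℤ`) for `f = -z(1+⋯)`, e.g. `f = ι(z)`. -/
def iotaPow (f : ℤ → R) (n : ℤ) : ℤ → R :=
  fun a => (msign n : R) * ∑ᶠ k : ℕ, (zbinom n k : R) * pow1 (hS f) k (a - n)

/-- `f - 1` for a power series with constant term `1`. -/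
def hOneS (f : ℤ → R) : ℤ → R := fun j => f j - oneS R j

/-- Multiplicative inverse of a power series with constant term `1`. -/
def invOne (f : ℤ → R) : ℤ → R :=
  fun a => ∑ᶠ k : ℕ, ((-1 : R) ^ k) * pow1 (hOneS f) k a

end Series

/-- A (one-dimensional, commutative) formal group law `F(z,w)` over `R`, together with
its (unique) inverse `ι`. -/
structure FormalGroupLaw (R : Type*) [CommRing R] where
  F : ℤ → ℤ → R
  F_supp : ∀ i j : ℤ, i < 0 ∨ j < 0 → F i j = 0
  /-- `F(z,0) = z`, so that `F(z,w) = z + w + O(zw)` using commutativity. -/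
  F_modw : ∀ i : ℤ, F i 0 = if i = 1 then 1 else 0
  F_comm : ∀ i j : ℤ, F i j = F j i
  /-- associativity `F(F(z,w),v) = F(z,F(w,v))`, coefficient-wise. -/
  F_assoc : ∀ a b c : ℤ,
    (∑ᶠ m : ℕ, F (m : ℤ) c * pow2 F m a b) = ∑ᶠ n : ℕ, F a (n : ℤ) * pow2 F n b c
  /-- the inverse `ι(z) = -z + O(z²)`. -/
  inv : ℤ → R
  inv_supp : ∀ n : ℤ, n < 1 → inv n = 0
  inv_one : inv 1 = -1
  /-- `F(z, ι(z)) = 0`, coefficient-wise. -/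
  inv_eq : ∀ n : ℤ, (∑ᶠ p : ℤ × ℕ, F p.1 (p.2 : ℤ) * pow1 inv p.2 (n - p.1)) = 0

namespace FormalGroupLaw

variable {R : Type*} [CommRing R] {M : Type*} [AddCommGroup M] [Module R M]

/-- The series `F(z, ι(w))`. -/
def Fzi (𝓕 : FormalGroupLaw R) : ℤ → ℤ → R :=
  fun i j => ∑ᶠ m : ℕ, 𝓕.F i (m : ℤ) * pow1 𝓕.inv m j

/-- The `F`-delta distribution `z⁻¹δ_F(w/z) = i_{z,w}F(z,ιw)⁻¹ - i_{w,z}F(z,ιw)⁻¹`. -/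
def delta (𝓕 : FormalGroupLaw R) : ℤ → ℤ → R :=
  fun a b => izwPow 𝓕.Fzi (-1) a b - iwzPowNeg 𝓕.Fzi (-1) a b

/-- `p_F(z) = F^{0,1}(z,0)⁻¹`, the coefficient series of the invariant 1-form. -/
def pF (𝓕 : FormalGroupLaw R) : ℤ → R := invOne (fun i => 𝓕.F i 1)

/-- `F`-residue: the coefficient of `z⁻¹` in `f(z)·p_F(z)`. -/
def resF (𝓕 : FormalGroupLaw R) (f : ℤ → M) : M := ∑ᶠ i : ℤ, 𝓕.pF i • f (-1 - i)

/-- The `F`-hyperderivative `𝒮^F_n f`, defined by `i_{z,w}f(F(z,w)) = ∑_n (𝒮^F_n f)(z) wⁿ`. -/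
def hyper (𝓕 : FormalGroupLaw R) (n : ℕ) (f : ℤ → R) : ℤ → R :=
  fun a => ∑ᶠ m : ℤ, f m * izwPow 𝓕.F m a (n : ℤ)

/-- `F`-binomial coefficients: `i_{z,w}F(z,w)^n = ∑_{i,j} binomF(n;i,j) z^i w^j`. -/
def binomF (𝓕 : FormalGroupLaw R) (n i j : ℤ) : R := izwPow 𝓕.F n i j

/-- `φ` is a logarithm of `F`: `φ(F(z,w)) = φ(z) + φ(w)`, `φ(0) = 0`, `φ'(0) = 1`. -/
def IsLogarithm (𝓕 : FormalGroupLaw R) (φ : ℤ → R) : Prop :=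
  (∀ n : ℤ, n < 0 → φ n = 0) ∧ φ 0 = 0 ∧ φ 1 = 1 ∧
  ∀ a b : ℤ, (∑ᶠ m : ℕ, φ (m : ℤ) * pow2 𝓕.F m a b)
    = (if b = 0 then φ a else 0) + (if a = 0 then φ b else 0)

end FormalGroupLaw

section Vertex

variable {R : Type*} [CommRing R] {V : Type*} [AddCommGroup V] [Module R V]

/-- For `c = ∑_m c_m v^m ∈ V((v))`, the substitution `v ↦ F(z,w)` (coefficient `(k,n)` of
`z^k w^n`, expanded in `V((z))⟦w⟧`). -/
def substF (𝓕 : FormalGroupLaw R) (c : ℤ → V) : ℤ → ℤ → V :=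
  fun k n => ∑ᶠ m : ℤ, izwPow 𝓕.F m k n • c m

/-- Coefficients of `i_{z,w} Y(a, F(z,w)) (Y(b,w)c)`, where `Ya v = Y(a,·)v` and
`d = Y(b,·)c`. -/
def substFProd (𝓕 : FormalGroupLaw R) (Ya : V → ℤ → V) (d : ℤ → V) : ℤ → ℤ → V :=
  fun k n => ∑ᶠ q : ℤ × ℤ, izwPow 𝓕.F q.1 k (n - q.2) • Ya (d q.2) q.1

end Vertex

/-- A vertex `F`-algebra `(V, 𝟙, 𝒮, Y)` over the formal group law `𝓕`.
`Y a b : ℤ → V` records the coefficients of `Y(a,z)b = ∑_k (Y a b k) z^k`, and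
`S n` is the component `𝒮⁽ⁿ⁾` of the `F`-shift operator `𝒮(z) = ∑_{n≥0} 𝒮⁽ⁿ⁾ zⁿ`. -/
structure VertexFAlgebra (R : Type*) [CommRing R] (𝓕 : FormalGroupLaw R)
    (V : Type*) [AddCommGroup V] [Module R V] where
  vac : V
  S : ℕ → V →ₗ[R] V
  Y : V →ₗ[R] V →ₗ[R] (ℤ → V)
  /-- `Y(a,z)b ∈ V((z))`. -/
  Y_laurent : ∀ a b : V, IsLaurent (Y a b)
  /-- `Y(a,z)𝟙` is holomorphic. -/
  vac_holo : ∀ (a : V) (k : ℤ), k < 0 → Y a vac k = 0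
  /-- `Y(a,z)𝟙|_{z=0} = a`. -/
  creation : ∀ a : V, Y a vac 0 = a
  /-- `Y(𝟙,z) = id`. -/
  Y_vac : ∀ (b : V) (k : ℤ), Y vac b k = if k = 0 then b else 0
  /-- `𝒮(0) = id`. -/
  S_zero : S 0 = LinearMap.id
  /-- `𝒮(z)𝟙 = 𝟙`. -/
  S_vac : ∀ n : ℕ, 1 ≤ n → S n vac = 0
  /-- `𝒮(z) ∘ 𝒮(w) = 𝒮(F(z,w))`, coefficient-wise. -/
  S_comp : ∀ (a : V) (i j : ℕ),
    S i (S j a) = ∑ᶠ m : ℕ, pow2 𝓕.F m (i : ℤ) (j : ℤ) • S m a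
  /-- `F`-translation covariance `Y(𝒮(w)a, z)b = i_{z,w} Y(a,F(z,w))b`. -/
  translation : ∀ (a b : V) (k : ℤ) (n : ℕ),
    Y (S n a) b k = substF 𝓕 (Y a b) k (n : ℤ)
  /-- weak `F`-associativity. -/
  weak_assoc : ∀ a b c : V, ∃ N : ℕ,
    mulS2 (pow2 𝓕.F N) (fun k l => Y (Y a b k) c l)
      = mulS2 (pow2 𝓕.F N) (substFProd 𝓕 (fun v => Y a v) (Y b c))
  /-- skew symmetry `Y(a,z)b = 𝒮(z)(Y(b,ι(z))a)`, coefficient-wise. -/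
  skew : ∀ (a b : V) (k : ℤ),
    Y a b k = ∑ᶠ q : ℕ × ℤ, iotaPow 𝓕.inv q.2 (k - (q.1 : ℤ)) • S q.1 (Y b a q.2)

end

/-!
Let `H = F(z₂, ι F(z₁, ι z₀))` and `K = F(z₁, ι F(z₀, z₂))`. The group law gives `F(H, K) = 0`,
and as `F(z, w) ≡ z + w` modulo `zw`, this means `H + K = H K T` for a power series `T`. Hence
`H⁻¹ + K⁻¹ = T` has the same coefficients in every region in which `H` and `K` can be expanded. The
two sides are `i_{z₂} H⁻¹ - i_{z₁} H⁻¹` and `i_{z₁} K⁻¹ - i_{z₂} K⁻¹`, where `i_{z_j}` denotes the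
expansion in the region where `z_j` dominates. This expansion is computed in the chart `z_j = x_j`,
`z_k = x_j x_k` (`k ≠ j`) of the blow-up of the origin, in which `H` and `K` become `x_j` times a
unit.
-/

noncomputable section

open MvPowerSeries

theorem finsum_eq_finsum_comp {α β M : Type*} [AddCommMonoid M] {g : β → α}
    (hg : Function.Injective g) {f : α → M} (hf : ∀ a, a ∉ Set.range g → f a = 0) :
    ∑ᶠ a, f a = ∑ᶠ b, f (g b) := by
  rw [← finsum_mem_range hg, finsum_mem_def, Set.indicator_eq_self.mpr]
  exact fun a ha => by_contra fun h => ha (hf a h)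

theorem finsum_ite_eq_apply_zero {α M : Type*} [DecidableEq α] [AddCommMonoid M] (a : α)
    (v : (Fin 2 → α) → M) :
    ∑ᶠ f, (if a = f 0 then v f else 0) = ∑ᶠ m, v ![a, m] := by
  rw [finsum_eq_finsum_comp (g := fun m => ![a, m]) fun m m' h => by simpa using h]
  · simp
  · intro f hf
    refine if_neg fun h => hf ⟨f 1, ?_⟩
    ext j
    fin_cases j <;> simp [h]

theorem comp_eq_vec {α β : Type*} (f : α → β) (q : Fin 2 → α) : f ∘ q = ![f (q 0), f (q 1)] := by
  ext1 j
  fin_cases j <;> rfl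

theorem inv_add_inv_eq_of_add_eq_mul {S : Type*} [CommRing S] {α β : Sˣ} {t : S}
    (h : (α : S) + β = α * (β * t)) : (↑α⁻¹ + ↑β⁻¹ : S) = t := by
  linear_combination ↑α⁻¹ * ↑β⁻¹ * h - (↑β⁻¹ - t * β * ↑β⁻¹) * α.mul_inv - (↑α⁻¹ - t) * β.mul_inv

variable {R σ τ : Type*} [CommRing R]

/-! ### Power series with integral exponents -/

/-- The inclusion of the exponents of power series into those of bilateral series. -/
def intExp : (σ →₀ ℕ) →+ (σ → ℤ) where
  toFun d i := d i
  map_zero' := by ext; simp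
  map_add' d e := by ext; simp

@[simp]
theorem intExp_apply (d : σ →₀ ℕ) (i : σ) : intExp d i = d i := rfl

theorem intExp_injective : Function.Injective (intExp : (σ →₀ ℕ) →+ (σ → ℤ)) := fun _ _ h =>
  Finsupp.ext fun i => Int.ofNat_inj.mp (congrFun h i)

theorem intExp_single [DecidableEq σ] (i : σ) (n : ℕ) :
    intExp (Finsupp.single i n) = Pi.single i (n : ℤ) := by
  ext j
  simp [Finsupp.single_apply, Pi.single_apply, eq_comm]

theorem mem_range_intExp [Finite σ] {e : σ → ℤ} : e ∈ Set.range intExp ↔ ∀ i, 0 ≤ e i := by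
  refine ⟨?_, fun h => ⟨Finsupp.equivFunOnFinite.symm fun i => (e i).toNat, ?_⟩⟩
  · rintro ⟨d, rfl⟩ i
    exact Int.natCast_nonneg _
  · ext i
    simp [h i]

/-- The coefficients of a power series regarded as a bilateral series, that is, extended by zero
to integral exponents. -/
def zcoeff (P : MvPowerSeries σ R) : (σ → ℤ) → R :=
  Function.extend intExp (fun d => coeff d P) 0

@[simp]
theorem zcoeff_intExp (P : MvPowerSeries σ R) (d : σ →₀ ℕ) :
    zcoeff P (intExp d) = coeff d P :=
  intExp_injective.extend_apply _ _ _

theorem zcoeff_of_notMem_range (P : MvPowerSeries σ R) {e : σ → ℤ} (he : e ∉ Set.range intExp) :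
    zcoeff P e = 0 :=
  Function.extend_apply' _ _ _ he

theorem zcoeff_of_neg (P : MvPowerSeries σ R) {e : σ → ℤ} {i : σ} (hi : e i < 0) :
    zcoeff P e = 0 := by
  refine zcoeff_of_notMem_range P ?_
  rintro ⟨d, rfl⟩
  exact absurd hi (not_lt.mpr (Int.natCast_nonneg _))

theorem ext_zcoeff {P Q : MvPowerSeries σ R} (h : ∀ e, zcoeff P e = zcoeff Q e) : P = Q := by
  ext d
  rw [← zcoeff_intExp, h, zcoeff_intExp]

theorem zcoeff_zero_left (e : σ → ℤ) : zcoeff (0 : MvPowerSeries σ R) e = 0 := by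
  by_cases he : e ∈ Set.range intExp
  · obtain ⟨n, rfl⟩ := he
    simp
  · exact zcoeff_of_notMem_range _ he

theorem zcoeff_zero_right (P : MvPowerSeries σ R) : zcoeff P 0 = constantCoeff P :=
  (map_zero intExp ▸ zcoeff_intExp P 0).trans (coeff_zero_eq_constantCoeff_apply P)

theorem zcoeff_add (P Q : MvPowerSeries σ R) (e : σ → ℤ) :
    zcoeff (P + Q) e = zcoeff P e + zcoeff Q e := by
  by_cases he : e ∈ Set.range intExp
  · obtain ⟨n, rfl⟩ := he
    simp
  · simp [zcoeff_of_notMem_range _ he]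

theorem zcoeff_neg (P : MvPowerSeries σ R) (e : σ → ℤ) : zcoeff (-P) e = -zcoeff P e := by
  by_cases he : e ∈ Set.range intExp
  · obtain ⟨n, rfl⟩ := he
    simp
  · simp [zcoeff_of_notMem_range _ he]

theorem zcoeff_monomial (d : σ →₀ ℕ) (e : σ → ℤ) [Decidable (e = intExp d)] :
    zcoeff (monomial d (1 : R)) e = if e = intExp d then 1 else 0 := by
  by_cases he : e ∈ Set.range intExp
  · obtain ⟨n, rfl⟩ := he
    classical
    rw [zcoeff_intExp, coeff_monomial]
    exact if_congr intExp_injective.eq_iff.symm rfl rfl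
  · rw [zcoeff_of_notMem_range _ he, if_neg fun h => he ⟨d, h.symm⟩]

theorem zcoeff_one (e : σ → ℤ) [Decidable (e = 0)] :
    zcoeff (1 : MvPowerSeries σ R) e = if e = 0 then 1 else 0 := by
  classical
  exact (zcoeff_monomial 0 e).trans (if_congr (by rw [map_zero]) rfl rfl)

theorem zcoeff_X [DecidableEq σ] (i : σ) (e : σ → ℤ) [Decidable (e = Pi.single i 1)] :
    zcoeff (X i : MvPowerSeries σ R) e = if e = Pi.single i 1 then 1 else 0 := by
  classical
  exact (zcoeff_monomial _ e).trans (if_congr (by rw [intExp_single, Nat.cast_one]) rfl rfl)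

theorem zcoeff_mul (P Q : MvPowerSeries σ R) (e : σ → ℤ) :
    zcoeff (P * Q) e = ∑ᶠ p, zcoeff P p * zcoeff Q (e - p) := by
  classical
  rw [finsum_eq_finsum_comp intExp_injective fun p hp => by
    rw [zcoeff_of_notMem_range P hp, zero_mul]]
  have hle (d : σ →₀ ℕ) (h : e - intExp d ∈ Set.range intExp) : ∃ c, e = intExp (d + c) := by
    obtain ⟨c, hc⟩ := h
    exact ⟨c, by rw [map_add, hc, add_sub_cancel]⟩
  by_cases he : e ∈ Set.range intExp
  · obtain ⟨n, rfl⟩ := he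
    have hinj : Set.InjOn Prod.fst
        (Finset.HasAntidiagonal.antidiagonal n : Set ((σ →₀ ℕ) × (σ →₀ ℕ))) := by
      intro x hx y hy hxy
      rw [Finset.mem_coe, Finset.HasAntidiagonal.mem_antidiagonal] at hx hy
      exact Prod.ext hxy (add_left_cancel (a := x.1) (by rw [hx, hxy, hy]))
    rw [zcoeff_intExp, coeff_mul, finsum_eq_sum_of_support_subset
      (s := (Finset.HasAntidiagonal.antidiagonal n).image Prod.fst), Finset.sum_image hinj]
    · refine Finset.sum_congr rfl fun x hx => ?_
      rw [← Finset.HasAntidiagonal.mem_antidiagonal.mp hx, map_add, add_sub_cancel_left,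
        zcoeff_intExp, zcoeff_intExp]
    · intro d hd
      obtain ⟨c, hc⟩ := hle d (by
        by_contra h
        exact hd (by simp only [zcoeff_of_notMem_range Q h, mul_zero]))
      simpa using ⟨c, (intExp_injective hc).symm⟩
  · rw [zcoeff_of_notMem_range _ he]
    refine (finsum_eq_zero_of_forall_eq_zero fun d => ?_).symm
    rw [zcoeff_of_notMem_range Q, mul_zero]
    intro h
    obtain ⟨c, rfl⟩ := hle d h
    exact he ⟨_, rfl⟩

theorem zcoeff_X_pow_mul [DecidableEq σ] (i : σ) (n : ℕ) (P : MvPowerSeries σ R) (e : σ → ℤ) :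
    zcoeff (X i ^ n * P) e = zcoeff P (e - Pi.single i (n : ℤ)) := by
  classical
  rw [X_pow_eq, zcoeff_mul, finsum_eq_single _ (intExp (Finsupp.single i n)) fun p hp => by
    rw [zcoeff_monomial, if_neg hp, zero_mul], zcoeff_intExp, coeff_monomial_same, one_mul,
    intExp_single]

theorem zcoeff_X_mul [DecidableEq σ] (i : σ) (P : MvPowerSeries σ R) (e : σ → ℤ) :
    zcoeff (X i * P) e = zcoeff P (e - Pi.single i 1) := by
  simpa using zcoeff_X_pow_mul i 1 P e

theorem X_mul_injective (i : σ) : Function.Injective fun P : MvPowerSeries σ R => X i * P := by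
  classical
  refine fun P Q h => ext fun d => ?_
  simpa only [zcoeff_X_mul, add_sub_cancel_right, zcoeff_intExp] using
    congrArg (zcoeff · (intExp d + (Pi.single i 1 : σ → ℤ))) h

theorem zcoeff_mul_subst [Fintype σ] {a : σ → MvPowerSeries τ R} (ha : HasSubst a)
    (Q : MvPowerSeries τ R) (P : MvPowerSeries σ R) (e : τ → ℤ) :
    zcoeff (Q * subst a P) e =
      ∑ᶠ d : σ →₀ ℕ, coeff d P * zcoeff (Q * ∏ i, a i ^ d i) e := by
  classical
  by_cases he : e ∈ Set.range intExp
  · obtain ⟨n, rfl⟩ := he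
    simp only [zcoeff_intExp, coeff_mul, coeff_subst ha, Finset.mul_sum]
    rw [finsum_sum_comm]
    · refine Finset.sum_congr rfl fun x _ => ?_
      rw [mul_finsum' _ _ (coeff_subst_finite ha P x.2)]
      refine finsum_congr fun d => ?_
      rw [Finsupp.prod_fintype _ _ (by simp), smul_eq_mul]
      ring
    · refine fun x _ => (coeff_subst_finite ha P x.2).subset fun d hd h => hd ?_
      beta_reduce at h ⊢
      rw [Finsupp.prod_fintype _ _ (by simp), smul_eq_mul] at h
      simp only [mul_left_comm _ (coeff x.1 Q), h, mul_zero]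
  · simp [zcoeff_of_notMem_range _ he]

theorem zcoeff_rename (q : σ ↪ τ) (P : MvPowerSeries σ R) {e : τ → ℤ}
    (he : ∀ t ∉ Set.range q, e t = 0) : zcoeff (rename q P) e = zcoeff P (e ∘ q) := by
  by_cases h : e ∘ q ∈ Set.range intExp
  · obtain ⟨d, hd⟩ := h
    have : e = intExp (d.embDomain q) := by
      ext t
      by_cases ht : t ∈ Set.range q
      · obtain ⟨s, rfl⟩ := ht
        simpa using (congrFun hd s).symm
      · rw [he t ht, intExp_apply, Finsupp.embDomain_of_notMem_range _ _ _ ht, Nat.cast_zero]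
    rw [← hd, this, zcoeff_intExp, zcoeff_intExp, coeff_embDomain_rename]
  · rw [zcoeff_of_notMem_range _ h, zcoeff_of_notMem_range]
    rintro ⟨n, rfl⟩
    exact h ⟨n.comapDomain q q.injective.injOn, rfl⟩

theorem zcoeff_rename_eq_zero (q : σ ↪ τ) (P : MvPowerSeries σ R) {e : τ → ℤ} {t : τ}
    (ht : t ∉ Set.range q) (he : e t ≠ 0) : zcoeff (rename q P) e = 0 := by
  by_cases h : e ∈ Set.range intExp
  · obtain ⟨n, rfl⟩ := h
    rw [zcoeff_intExp]
    refine coeff_rename_eq_zero _ _ ?_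
    rintro ⟨d, rfl⟩
    exact he (by rw [intExp_apply, Finsupp.mapDomain_of_notMem_range _ _ ht, Nat.cast_zero])
  · exact zcoeff_of_notMem_range _ h

theorem hasSubst_cons_rename (p : τ) (q : σ ↪ τ) {C : MvPowerSeries σ R}
    (hC : constantCoeff C = 0) : HasSubst ![X p, rename q C] :=
  hasSubst_of_constantCoeff_zero fun j => by fin_cases j <;> simp [hC]

section ComplementaryVariable

variable {p : τ} {q : σ ↪ τ}

theorem zcoeff_rename_sub_single [DecidableEq τ] (hp : Set.range q = {p}ᶜ)
    (P : MvPowerSeries σ R) (e : τ → ℤ) (k : ℤ) :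
    zcoeff (rename q P) (e - Pi.single p k) = if e p = k then zcoeff P (e ∘ q) else 0 := by
  have hne (s : σ) : q s ≠ p := hp.subset ⟨s, rfl⟩
  split_ifs with h
  · rw [zcoeff_rename]
    · congr 1
      ext s
      simp [hne s]
    · intro t ht
      obtain rfl : t = p := by simpa [hp] using ht
      simp [h]
  · exact zcoeff_rename_eq_zero q P (t := p) (by simp [hp]) (by simpa [sub_eq_zero] using h)

theorem zcoeff_subst_X_rename (hp : Set.range q = {p}ᶜ) {P : MvPowerSeries σ R}
    (hP : constantCoeff P = 0) (D : MvPowerSeries (Fin 2) R) (e : τ → ℤ) :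
    zcoeff (subst ![X p, rename q P] D) e =
      ∑ᶠ n : ℕ, zcoeff D ![e p, n] * zcoeff (P ^ n) (e ∘ q) := by
  classical
  have hprod (d : Fin 2 →₀ ℕ) : zcoeff (1 * ∏ j, ![X p, rename q P] j ^ d j) e =
      if e p = d 0 then zcoeff (P ^ d 1) (e ∘ q) else 0 := by
    rw [one_mul, Fin.prod_univ_two, ← zcoeff_rename_sub_single hp, map_pow, ← zcoeff_X_pow_mul]
    rfl
  rw [← one_mul (subst _ D), zcoeff_mul_subst (hasSubst_cons_rename p q hP)]
  simp only [hprod]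
  calc _ = ∑ᶠ f : Fin 2 → ℤ, if e p = f 0 then
        zcoeff D f * zcoeff (P ^ (f 1).toNat) (e ∘ q) else 0 := by
        rw [finsum_eq_finsum_comp intExp_injective fun f hf => by
          rw [zcoeff_of_notMem_range D hf, zero_mul, ite_self]]
        simp
    _ = ∑ᶠ m : ℤ, zcoeff D ![e p, m] * zcoeff (P ^ m.toNat) (e ∘ q) :=
        finsum_ite_eq_apply_zero _ fun f => zcoeff D f * zcoeff (P ^ (f 1).toNat) (e ∘ q)
    _ = _ := by
        rw [finsum_eq_finsum_comp Nat.cast_injective]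
        · simp
        · intro m hm
          rw [zcoeff_of_neg D (i := 1), zero_mul]
          by_contra h
          exact hm ⟨m.toNat, by simpa using h⟩

theorem sum_eq_add_sum_comp [Fintype σ] [Fintype τ] {M : Type*} [AddCommMonoid M]
    (hp : Set.range q = {p}ᶜ) (e : τ → M) : ∑ t, e t = e p + ∑ s, e (q s) := by
  classical
  rw [Fintype.sum_eq_add_sum_compl p, ← Finset.sum_map, Finset.coe_injective (a₁ := {p}ᶜ)]
  simp [hp]

end ComplementaryVariable

/-! ### Charts of the blow-up of the origin -/

section Chart

variable [DecidableEq σ]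

/-- The `i`-th chart `z_i = x_i`, `z_j = x_i x_j` (`j ≠ i`) of the blow-up of the origin, as a
substitution. A Laurent series in which `z_i` dominates becomes a power series in the coordinates
`x_j` up to a power of `x_i`. -/
def chart (R : Type*) [CommRing R] (i : σ) : σ → MvPowerSeries σ R :=
  fun j => if j = i then X i else X i * X j

@[simp]
theorem chart_self (i : σ) : chart R i i = X i := if_pos rfl

theorem chart_of_ne {i j : σ} (h : j ≠ i) : chart R i j = X i * X j := if_neg h

theorem hasSubst_chart [Finite σ] (i : σ) : HasSubst (chart R i) :=
  hasSubst_of_constantCoeff_zero fun j => by unfold chart; split_ifs <;> simp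

/-- The variable `z_i` dominates `C`: in the `i`-th chart `C` becomes `x_i` times a unit. The
integer powers of such a `C` can then be expanded in the region where `z_i` dominates. -/
def IsLeadingVar (i : σ) (C : MvPowerSeries σ R) : Prop :=
  ∃ u : (MvPowerSeries σ R)ˣ, X i * (u : MvPowerSeries σ R) = subst (chart R i) C

/-- The unit `u` with `C = x_i u` in the `i`-th chart: the strict transform of `C`. -/
def IsLeadingVar.strictTransform {i : σ} {C : MvPowerSeries σ R} (h : IsLeadingVar i C) :
    (MvPowerSeries σ R)ˣ :=
  h.choose

theorem IsLeadingVar.X_mul_strictTransform {i : σ} {C : MvPowerSeries σ R}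
    (h : IsLeadingVar i C) : X i * (h.strictTransform : MvPowerSeries σ R) = subst (chart R i) C :=
  h.choose_spec

theorem IsLeadingVar.strictTransform_eq {i : σ} {C : MvPowerSeries σ R} (h : IsLeadingVar i C)
    {u : (MvPowerSeries σ R)ˣ} (hu : X i * (u : MvPowerSeries σ R) = subst (chart R i) C) :
    h.strictTransform = u :=
  Units.ext (X_mul_injective i (h.X_mul_strictTransform.trans hu.symm))

section ChartExp

variable [Fintype σ]

/-- The exponents of the monomial `z ^ e` in the coordinates of the `i`-th chart. -/
def chartExp (i : σ) : (σ → ℤ) ≃+ (σ → ℤ) where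
  toFun e := Function.update e i (∑ j, e j)
  invFun e := Function.update e i (2 * e i - ∑ j, e j)
  left_inv e := by
    simp only [Finset.sum_update_of_mem (Finset.mem_univ i), ← Finset.erase_eq,
      Finset.sum_erase_eq_sub (Finset.mem_univ i), Function.update_self, Function.update_idem]
    convert Function.update_eq_self i e using 2
    ring
  right_inv e := by
    simp only [Finset.sum_update_of_mem (Finset.mem_univ i), ← Finset.erase_eq,
      Finset.sum_erase_eq_sub (Finset.mem_univ i), Function.update_idem]
    convert Function.update_eq_self i e using 2
    ring
  map_add' e e' := by
    rw [← Function.update_add]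
    simp [Finset.sum_add_distrib]

@[simp]
theorem chartExp_self (i : σ) (e : σ → ℤ) : chartExp i e i = ∑ j, e j :=
  Function.update_self ..

theorem chartExp_of_ne {i j : σ} (h : j ≠ i) (e : σ → ℤ) : chartExp i e j = e j :=
  Function.update_of_ne h ..

theorem chartExp_single_self (i : σ) (n : ℤ) : chartExp i (Pi.single i n) = Pi.single i n := by
  ext j
  obtain rfl | h := eq_or_ne j i
  · simp
  · rw [chartExp_of_ne h]

theorem chartExp_single_of_ne {i j : σ} (h : j ≠ i) (n : ℤ) :
    chartExp i (Pi.single j n) = Pi.single i n + Pi.single j n := by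
  ext k
  obtain rfl | hk := eq_or_ne k i
  · simp [h.symm]
  · rw [chartExp_of_ne hk, Pi.add_apply, Pi.single_eq_of_ne hk, zero_add]

theorem exists_chart_eq_monomial (i j : σ) :
    ∃ c, chart R i j = monomial c 1 ∧ intExp c = chartExp i (intExp (Finsupp.single j 1)) := by
  obtain rfl | h := eq_or_ne j i
  · exact ⟨Finsupp.single j 1, chart_self j, by simp [intExp_single, chartExp_single_self]⟩
  · refine ⟨Finsupp.single i 1 + Finsupp.single j 1, ?_, ?_⟩
    · rw [chart_of_ne h, X, X, monomial_mul_monomial, one_mul]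
    · simp [intExp_single, chartExp_single_of_ne h]

theorem zcoeff_subst_chart (i : σ) (P : MvPowerSeries σ R) (e : σ → ℤ) :
    zcoeff (subst (chart R i) P) (chartExp i e) = zcoeff P e := by
  choose c hc hc' using exists_chart_eq_monomial (R := R) i
  have hprod (d : σ →₀ ℕ) : zcoeff (1 * ∏ j, chart R i j ^ d j) (chartExp i e) =
      zcoeff (monomial d 1) e := by
    have hd : intExp (∑ j, d j • c j) = chartExp i (intExp d) := by
      conv_rhs => rw [← Finsupp.univ_sum_single d]
      simp only [map_sum, map_nsmul, hc']
      simp only [← map_nsmul, Finsupp.smul_single, smul_eq_mul, mul_one]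
    simp only [hc, monomial_pow, one_pow, prod_monomial, Finset.prod_const_one, one_mul,
      zcoeff_monomial, hd, (chartExp i).injective.eq_iff]
  rw [← one_mul (subst _ P), zcoeff_mul_subst (hasSubst_chart i)]
  simp only [hprod]
  by_cases he : e ∈ Set.range intExp
  · obtain ⟨n, rfl⟩ := he
    rw [finsum_eq_single _ n fun d hd => by
      rw [zcoeff_intExp, coeff_monomial_ne hd.symm, mul_zero]]
    simp
  · simp [zcoeff_of_notMem_range _ he]

end ChartExp

section Finite

variable [Finite σ]

theorem X_dvd_subst_chart {C : MvPowerSeries σ R} (h : constantCoeff C = 0) (i : σ) :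
    X i ∣ subst (chart R i) C := by
  cases nonempty_fintype σ
  refine X_dvd_iff.mpr fun m hm => ?_
  obtain ⟨e, he⟩ := (chartExp i).surjective (intExp m)
  rw [← zcoeff_intExp, ← he, zcoeff_subst_chart]
  by_cases hr : e ∈ Set.range intExp
  · have hsum : ∑ j, e j = 0 := by rw [← chartExp_self i, he, intExp_apply, hm, Nat.cast_zero]
    have h0 : e = 0 := funext fun j =>
      (Finset.sum_eq_zero_iff_of_nonneg fun j _ => mem_range_intExp.mp hr j).mp hsum j
        (Finset.mem_univ j)
    rw [h0, zcoeff_zero_right, h]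
  · exact zcoeff_of_notMem_range C hr

theorem isLeadingVar_of_isUnit {i : σ} {C : MvPowerSeries σ R} (h0 : constantCoeff C = 0)
    (h1 : IsUnit (zcoeff C (Pi.single i 1))) : IsLeadingVar i C := by
  cases nonempty_fintype σ
  obtain ⟨P, hP⟩ := X_dvd_subst_chart h0 i
  have hconst : constantCoeff P = zcoeff C (Pi.single i 1) := by
    rw [← zcoeff_subst_chart i, hP, zcoeff_X_mul, chartExp_single_self, sub_self,
      zcoeff_zero_right]
  obtain ⟨u, rfl⟩ := isUnit_iff_constantCoeff.mpr (hconst ▸ h1)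
  exact ⟨u, hP.symm⟩

theorem exists_subst_chart_zero {ρ : Type*} {p : σ} {q : ρ ↪ σ} (hp : Set.range q = {p}ᶜ)
    {C : MvPowerSeries ρ R} (hC : constantCoeff C = 0) :
    ∃ a : Fin 2 → MvPowerSeries σ R, HasSubst a ∧ a 0 = X p ∧
      X p * a 1 = subst (chart R p) (rename q C) ∧
      ∀ j, subst (chart R p) (![X p, rename q C] j) = subst a (chart R 0 j) := by
  cases nonempty_fintype σ
  obtain ⟨t, ht⟩ := X_dvd_subst_chart (C := rename q C) (by simpa using hC) p
  have ht0 : constantCoeff t = 0 := by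
    rw [← zcoeff_zero_right, ← sub_self (Pi.single p 1), ← zcoeff_X_mul, ← ht,
      ← chartExp_single_self, zcoeff_subst_chart]
    exact zcoeff_rename_eq_zero q C (t := p) (by simp [hp]) (by simp)
  have ha : HasSubst ![X p, t] := hasSubst_of_constantCoeff_zero fun j => by
    fin_cases j <;> simp [ht0]
  refine ⟨_, ha, rfl, ht.symm, fun j => ?_⟩
  fin_cases j
  · simp [subst_X ha, subst_X (hasSubst_chart p)]
  · simp [chart_of_ne, subst_mul ha, subst_X ha, ht]

theorem exists_subst_chart_one {ρ : Type*} {p : σ} {q : ρ ↪ σ} {l : ρ} {C : MvPowerSeries ρ R}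
    {γ : (MvPowerSeries σ R)ˣ} (h : p ≠ q l)
    (hγ : X (q l) * (γ : MvPowerSeries σ R) = subst (chart R (q l)) (rename q C)) :
    ∃ a : Fin 2 → MvPowerSeries σ R, HasSubst a ∧
      a 0 = X p * (↑γ⁻¹ : MvPowerSeries σ R) ∧ a 1 = X (q l) * (γ : MvPowerSeries σ R) ∧
      ∀ j, subst (chart R (q l)) (![X p, rename q C] j) = subst a (chart R 1 j) := by
  obtain ⟨a, ha0, ha1⟩ : ∃ a : Fin 2 → MvPowerSeries σ R,
      a 0 = X p * (↑γ⁻¹ : MvPowerSeries σ R) ∧ a 1 = X (q l) * (γ : MvPowerSeries σ R) :=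
    ⟨![_, _], rfl, rfl⟩
  have ha : HasSubst a := hasSubst_of_constantCoeff_zero fun j => by
    fin_cases j <;> simp [ha0, ha1]
  refine ⟨a, ha, ha0, ha1, fun j => ?_⟩
  fin_cases j
  · have : a 1 * a 0 = X (q l) * X p := by
      rw [ha0, ha1]
      linear_combination (X p * X (q l) : MvPowerSeries σ R) * γ.mul_inv
    simpa [chart_of_ne, h, subst_mul ha, subst_X ha, subst_X (hasSubst_chart (q l))] using
      this.symm
  · simpa [subst_X ha, ha1] using hγ.symm

theorem subst_chart_rename [Finite τ] [DecidableEq τ] (q : σ ↪ τ) (l : σ) (P : MvPowerSeries σ R) :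
    subst (chart R (q l)) (rename q P) = rename q (subst (chart R l) P) := by
  have hq : HasSubst (X ∘ q : σ → MvPowerSeries τ R) := HasSubst.X_comp q
  rw [rename_eq_subst, rename_eq_subst, subst_comp_subst_apply hq (hasSubst_chart _),
    subst_comp_subst_apply (hasSubst_chart _) hq]
  congr 1
  funext s
  rw [Function.comp_apply, subst_X (hasSubst_chart _), ← rename_eq_subst]
  obtain rfl | h := eq_or_ne s l
  · simp
  · simp [chart_of_ne h, chart_of_ne (q.injective.ne h)]

namespace IsLeadingVar

variable {i : σ} {C : MvPowerSeries σ R}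

theorem constantCoeff_strictTransform (h : IsLeadingVar i C) :
    constantCoeff (h.strictTransform : MvPowerSeries σ R) = zcoeff C (Pi.single i 1) := by
  cases nonempty_fintype σ
  rw [← zcoeff_subst_chart i, ← h.X_mul_strictTransform, zcoeff_X_mul, chartExp_single_self,
    sub_self, zcoeff_zero_right]

theorem constantCoeff_eq_zero (h : IsLeadingVar i C) : constantCoeff C = 0 := by
  cases nonempty_fintype σ
  rw [← zcoeff_zero_right, ← zcoeff_subst_chart i, ← h.X_mul_strictTransform, zcoeff_X_mul]
  exact zcoeff_of_neg _ (i := i) (by simp)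

theorem X_mul_neg_strictTransform (h : IsLeadingVar i C) :
    X i * ((-h.strictTransform : (MvPowerSeries σ R)ˣ) : MvPowerSeries σ R) =
      subst (chart R i) (-C) := by
  rw [Units.val_neg, mul_neg, h.X_mul_strictTransform, ← coe_substAlgHom (R := R)
    (hasSubst_chart i), map_neg]

theorem neg (h : IsLeadingVar i C) : IsLeadingVar i (-C) :=
  ⟨_, h.X_mul_neg_strictTransform⟩

/-- By `hya` the substitution `y` lifts to a substitution `a` between two charts of the blow-ups,
and by `hai` it respects their exceptional divisors up to `g`; so strict transforms pull back. -/
theorem X_mul_map_strictTransform [Finite τ] [DecidableEq τ] {r : τ}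
    {y a : σ → MvPowerSeries τ R} {g : (MvPowerSeries τ R)ˣ} (h : IsLeadingVar i C)
    (hy : HasSubst y) (ha : HasSubst a) (hai : a i = X r * (g : MvPowerSeries τ R))
    (hya : ∀ j, subst (chart R r) (y j) = subst a (chart R i j)) :
    X r * ((g * Units.map (substAlgHom (R := R) ha : _ →* _) h.strictTransform :
      (MvPowerSeries τ R)ˣ) : MvPowerSeries τ R) = subst (chart R r) (subst y C) := by
  rw [subst_comp_subst_apply hy (hasSubst_chart r), funext hya,
    ← subst_comp_subst_apply (hasSubst_chart i) ha, ← h.X_mul_strictTransform, subst_mul ha,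
    subst_X ha, hai, mul_assoc, Units.val_mul, Units.coe_map, MonoidHom.coe_coe, coe_substAlgHom]

theorem X_mul_rename_strictTransform [Finite τ] [DecidableEq τ] {q : σ ↪ τ} {l : σ}
    (hC : IsLeadingVar l C) :
    X (q l) * ((Units.map (rename (R := R) q : _ →* _) hC.strictTransform : (MvPowerSeries τ R)ˣ) :
      MvPowerSeries τ R) = subst (chart R (q l)) (rename q C) := by
  rw [subst_chart_rename, ← hC.X_mul_strictTransform, map_mul, rename_X, Units.coe_map,
    MonoidHom.coe_coe]

end IsLeadingVar

end Finite

namespace IsLeadingVar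

variable [Fintype σ] {i : σ} {C : MvPowerSeries σ R}

/-- The coefficient of `z ^ e` in the expansion of `C ^ n` in the region where `z_i` dominates. -/
def laurentCoeff (h : IsLeadingVar i C) (n : ℤ) (e : σ → ℤ) : R :=
  zcoeff ((h.strictTransform ^ n : (MvPowerSeries σ R)ˣ) : MvPowerSeries σ R)
    (chartExp i e - Pi.single i n)

theorem laurentCoeff_natCast (h : IsLeadingVar i C) (n : ℕ) (e : σ → ℤ) :
    h.laurentCoeff n e = zcoeff (C ^ n) e := by
  rw [← zcoeff_subst_chart i, subst_pow (hasSubst_chart i), ← h.X_mul_strictTransform, mul_pow,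
    zcoeff_X_pow_mul, laurentCoeff, zpow_natCast, Units.val_pow_eq_pow_val]

theorem laurentCoeff_eq_zero (h : IsLeadingVar i C) {n : ℤ} {e : σ → ℤ} (he : ∑ j, e j < n) :
    h.laurentCoeff n e = 0 :=
  zcoeff_of_neg _ (i := i) (by simpa using he)

theorem laurentCoeff_neg_one_neg (h : IsLeadingVar i C) (h' : IsLeadingVar i (-C)) (e : σ → ℤ) :
    h'.laurentCoeff (-1) e = -h.laurentCoeff (-1) e := by
  rw [laurentCoeff, laurentCoeff, h'.strictTransform_eq h.X_mul_neg_strictTransform,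
    zpow_neg_one, zpow_neg_one, inv_neg, Units.val_neg, zcoeff_neg]

theorem laurentCoeff_neg_one_add {H K T : MvPowerSeries σ R} (hH : IsLeadingVar i H)
    (hK : IsLeadingVar i K) (h : H + K = H * (K * T)) (e : σ → ℤ) :
    hH.laurentCoeff (-1) e + hK.laurentCoeff (-1) e = zcoeff T e := by
  have hs := hasSubst_chart (R := R) i
  have hadd : (hH.strictTransform + hK.strictTransform : MvPowerSeries σ R) =
      hH.strictTransform * (hK.strictTransform * (X i * subst (chart R i) T : MvPowerSeries σ R))
      := by
    have := congrArg (subst (chart R i)) h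
    rw [subst_add hs, subst_mul hs, subst_mul hs, ← hH.X_mul_strictTransform,
      ← hK.X_mul_strictTransform] at this
    refine X_mul_injective i ?_
    linear_combination this
  rw [← zcoeff_subst_chart i T, laurentCoeff, laurentCoeff, ← zcoeff_add, zpow_neg_one,
    zpow_neg_one, inv_add_inv_eq_of_add_eq_mul hadd, zcoeff_X_mul, Pi.single_neg, sub_neg_eq_add,
    add_sub_cancel_right]

section Composition

variable [Fintype τ] [DecidableEq τ] {r : τ} {y a : σ → MvPowerSeries τ R}
  {g : (MvPowerSeries τ R)ˣ}

/-- In `hw`, `w f` is the coefficient of `z ^ e` in the expansion of the monomial `y ^ f`. -/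
theorem laurentCoeff_subst (h : IsLeadingVar i C) (hr : IsLeadingVar r (subst y C))
    (hy : HasSubst y) (ha : HasSubst a) (hai : a i = X r * (g : MvPowerSeries τ R))
    (hya : ∀ j, subst (chart R r) (y j) = subst a (chart R i j)) (n : ℤ) (e : τ → ℤ)
    {w : (σ → ℤ) → R} (hw : ∀ (d : σ →₀ ℕ) (f : σ → ℤ), chartExp i f = intExp d + Pi.single i n →
      zcoeff (((g ^ n : (MvPowerSeries τ R)ˣ) : MvPowerSeries τ R) * ∏ j, a j ^ d j)
        (chartExp r e - Pi.single r n) = w f) :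
    hr.laurentCoeff n e = ∑ᶠ f, h.laurentCoeff n f * w f := by
  have hu := hr.strictTransform_eq (h.X_mul_map_strictTransform hy ha hai hya)
  have hpow : ((hr.strictTransform ^ n : (MvPowerSeries τ R)ˣ) : MvPowerSeries τ R) =
      ((g ^ n : (MvPowerSeries τ R)ˣ) : MvPowerSeries τ R) *
        subst a ((h.strictTransform ^ n : (MvPowerSeries σ R)ˣ) : MvPowerSeries σ R) := by
    rw [hu, mul_zpow, ← map_zpow, Units.val_mul, Units.coe_map, MonoidHom.coe_coe,
      coe_substAlgHom]
  let φ := (chartExp i).toEquiv.trans (Equiv.subRight (Pi.single i n))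
  rw [laurentCoeff, hpow, zcoeff_mul_subst ha, ← finsum_comp_equiv φ.symm,
    finsum_eq_finsum_comp intExp_injective]
  · refine finsum_congr fun d => ?_
    have hφ : chartExp i (φ.symm (intExp d)) = intExp d + Pi.single i n := by simp [φ]
    rw [hw d _ hφ, laurentCoeff, hφ, add_sub_cancel_right, zcoeff_intExp]
  · intro b hb
    have hφ : chartExp i (φ.symm b) = b + Pi.single i n := by simp [φ]
    rw [laurentCoeff, hφ, add_sub_cancel_right, zcoeff_of_notMem_range _ hb, zero_mul]

end Composition

section SubstRename

variable [Fintype τ] [DecidableEq τ] {p : τ} {q : σ ↪ τ} {l : σ} {D : MvPowerSeries (Fin 2) R}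

theorem exists_laurentCoeff_subst_rename_zero (hp : Set.range q = {p}ᶜ) (hD : IsLeadingVar 0 D)
    (hC : IsLeadingVar l C) :
    ∃ h : IsLeadingVar p (subst ![X p, rename q C] D), ∀ n e,
      h.laurentCoeff n e =
        ∑ᶠ m, hD.laurentCoeff n ![e p, m] * hC.laurentCoeff m (e ∘ q) := by
  have hy := hasSubst_cons_rename p q hC.constantCoeff_eq_zero
  obtain ⟨a, ha, ha0, hat, hya⟩ := exists_subst_chart_zero hp hC.constantCoeff_eq_zero
  have ha1 : a 0 = X p * ((1 : (MvPowerSeries τ R)ˣ) : MvPowerSeries τ R) := by simp [ha0]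
  have h : IsLeadingVar p (subst ![X p, rename q C] D) :=
    ⟨_, hD.X_mul_map_strictTransform hy ha ha1 hya⟩
  refine ⟨h, fun n e => ?_⟩
  rw [hD.laurentCoeff_subst _ hy ha ha1 hya n e
    (w := fun f => if e p = f 0 then hC.laurentCoeff (f 1) (e ∘ q) else 0) fun d f hf => ?_]
  · simp only [mul_ite, mul_zero]
    exact finsum_ite_eq_apply_zero (e p) fun f =>
      hD.laurentCoeff n f * hC.laurentCoeff (f 1) (e ∘ q)
  have hf1 : f 1 = d 1 := by simpa [chartExp_of_ne] using congrFun hf 1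
  have hf0 : f 0 + d 1 = d 0 + n := by simpa [hf1] using congrFun hf 0
  have hE : chartExp p e - Pi.single p n - Pi.single p (d 0 : ℤ) =
      chartExp p (e - Pi.single p (f 0)) - Pi.single p (d 1 : ℤ) := by
    rw [map_sub, chartExp_single_self, sub_sub, sub_sub, ← Pi.single_add, ← Pi.single_add, hf0,
      add_comm]
  calc zcoeff _ (chartExp p e - Pi.single p n)
      = zcoeff (X p ^ d 0 * a 1 ^ d 1) (chartExp p e - Pi.single p n) := by simp [ha0]
    _ = zcoeff (X p ^ d 1 * a 1 ^ d 1) (chartExp p (e - Pi.single p (f 0))) := by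
      rw [zcoeff_X_pow_mul, hE, zcoeff_X_pow_mul]
    _ = zcoeff (rename q (C ^ d 1)) (e - Pi.single p (f 0)) := by
      rw [← mul_pow, hat, ← subst_pow (hasSubst_chart p), zcoeff_subst_chart, map_pow]
    _ = _ := by rw [zcoeff_rename_sub_single hp, hf1, laurentCoeff_natCast]

theorem zcoeff_X_pow_mul_X_pow_mul_rename_strictTransform (hp : Set.range q = {p}ᶜ)
    (hC : IsLeadingVar l C) (a b : ℕ) (m : ℤ) (e : τ → ℤ) :
    zcoeff (X (q l) ^ b * (X p ^ a * rename q (↑(hC.strictTransform ^ m) : MvPowerSeries σ R)))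
      (chartExp (q l) e - Pi.single (q l) (m + a - b)) =
        if e p = a then hC.laurentCoeff m (e ∘ q) else 0 := by
  have hne : p ≠ q l := fun h => hp.subset ⟨l, rfl⟩ h.symm
  rw [zcoeff_X_pow_mul, zcoeff_X_pow_mul, sub_sub (chartExp _ _),
    ← Pi.single_add, sub_add_cancel, zcoeff_rename_sub_single hp, Pi.sub_apply,
    chartExp_of_ne hne, Pi.single_eq_of_ne hne, sub_zero]
  refine if_ctx_congr Iff.rfl (fun ha => ?_) fun _ => rfl
  rw [laurentCoeff]
  congr 1
  ext s
  obtain rfl | hs := eq_or_ne s l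
  · simp only [Function.comp_apply, Pi.sub_apply, chartExp_self, sum_eq_add_sum_comp hp, ha,
      Pi.single_eq_same]
    ring
  · simp [chartExp_of_ne hs, chartExp_of_ne (q.injective.ne hs), hs]

theorem exists_laurentCoeff_subst_rename_one (hp : Set.range q = {p}ᶜ) (hD : IsLeadingVar 1 D)
    (hC : IsLeadingVar l C) :
    ∃ h : IsLeadingVar (q l) (subst ![X p, rename q C] D), ∀ n e,
      h.laurentCoeff n e =
        ∑ᶠ m, hD.laurentCoeff n ![e p, m] * hC.laurentCoeff m (e ∘ q) := by
  obtain ⟨γ, hγ⟩ : ∃ γ : (MvPowerSeries τ R)ˣ, γ =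
      Units.map (rename (R := R) q : _ →* _) hC.strictTransform := ⟨_, rfl⟩
  have hy := hasSubst_cons_rename p q hC.constantCoeff_eq_zero
  obtain ⟨a, ha, ha0, ha1, hya⟩ := exists_subst_chart_one (p := p) (γ := γ)
    (fun h => hp.subset ⟨l, rfl⟩ h.symm) (hγ ▸ X_mul_rename_strictTransform hC)
  have h : IsLeadingVar (q l) (subst ![X p, rename q C] D) :=
    ⟨_, hD.X_mul_map_strictTransform hy ha ha1 hya⟩
  refine ⟨h, fun n e => ?_⟩
  rw [hD.laurentCoeff_subst _ hy ha ha1 hya n e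
    (w := fun f => if e p = f 0 then hC.laurentCoeff (f 1) (e ∘ q) else 0) fun d f hf => ?_]
  · simp only [mul_ite, mul_zero]
    exact finsum_ite_eq_apply_zero (e p) fun f =>
      hD.laurentCoeff n f * hC.laurentCoeff (f 1) (e ∘ q)
  have hf0 : f 0 = d 0 := by simpa [chartExp_of_ne] using congrFun hf 0
  have hf1 : n = f 1 + d 0 - d 1 := by
    have : f 0 + f 1 = d 1 + n := by simpa using congrFun hf 1
    rw [← hf0, add_comm, this, add_sub_cancel_left]
  have hpow : ((γ ^ n : (MvPowerSeries τ R)ˣ) : MvPowerSeries τ R) * ∏ j, a j ^ d j =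
      X (q l) ^ d 1 * (X p ^ d 0 * rename q (↑(hC.strictTransform ^ f 1) : MvPowerSeries σ R)) := by
    have hγn : γ ^ n * γ⁻¹ ^ d 0 * γ ^ d 1 = γ ^ f 1 := by
      rw [hf1, inv_pow, ← zpow_natCast, ← zpow_natCast, ← zpow_neg, ← zpow_add, ← zpow_add]
      ring_nf
    have hγf : rename q (↑(hC.strictTransform ^ f 1) : MvPowerSeries σ R) =
        ((γ ^ f 1 : (MvPowerSeries τ R)ˣ) : MvPowerSeries τ R) := by
      rw [hγ, ← map_zpow, Units.coe_map, MonoidHom.coe_coe]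
    rw [hγf, ← hγn, Fin.prod_univ_two]
    simp only [ha0, ha1, Units.val_mul, Units.val_pow_eq_pow_val]
    ring
  rw [hf0, hpow, ← zcoeff_X_pow_mul_X_pow_mul_rename_strictTransform hp hC (d 0) (d 1), ← hf1]

theorem finite_support_laurentCoeff_mul {i : Fin 2} (hD : IsLeadingVar i D)
    (hC : IsLeadingVar l C) (n a : ℤ) (f : σ → ℤ) :
    (Function.support fun m => hD.laurentCoeff n ![a, m] * hC.laurentCoeff m f).Finite := by
  refine (Set.finite_Icc (n - a) (∑ s, f s)).subset fun m hm => ?_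
  constructor
  · by_contra! h
    exact hm (mul_eq_zero_of_left (hD.laurentCoeff_eq_zero (by simp; omega)) _)
  · by_contra! h
    exact hm (mul_eq_zero_of_right _ (hC.laurentCoeff_eq_zero h))

end SubstRename

end IsLeadingVar

end Chart

/-! ### Newton expansions -/

theorem pow1_zcoeff (P : PowerSeries R) (k : ℕ) :
    pow1 (fun a => zcoeff P fun _ => a) k = fun a => zcoeff (P ^ k) fun _ => a := by
  induction k with
  | zero =>
    ext a
    simp [pow1, oneS, zcoeff_one, funext_iff]
  | succ k ih =>
    ext a
    rw [pow1, ih, mulS, pow_succ', zcoeff_mul, ← finsum_comp_equiv (Equiv.funUnique Unit ℤ).symm]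
    rfl

theorem pow2_zcoeff (L : ℤ × ℤ ≃+ (Fin 2 → ℤ)) (P : MvPowerSeries (Fin 2) R) (k : ℕ) :
    pow2 (fun a b => zcoeff P (L (a, b))) k = fun a b => zcoeff (P ^ k) (L (a, b)) := by
  induction k with
  | zero =>
    ext a b
    simp [pow2, oneS2, zcoeff_one]
  | succ k ih =>
    ext a b
    rw [pow2, ih, mulS2, pow_succ', zcoeff_mul, ← finsum_comp_equiv L.toEquiv]
    refine finsum_congr fun p => ?_
    change _ = zcoeff P (L p) * zcoeff (P ^ k) (L (a, b) - L p)
    rw [← map_sub]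
    rfl

theorem zbinom_eq_choose (n : ℤ) (k : ℕ) : zbinom n k = Ring.choose n k := by
  unfold zbinom
  split_ifs with h
  · obtain ⟨m, rfl⟩ := Int.eq_ofNat_of_zero_le h
    rw [Ring.choose_natCast, Int.toNat_natCast]
  · rw [← neg_neg n, Ring.choose_neg,
      show -n + k - 1 = ((k - n - 1 : ℤ).toNat : ℤ) by omega, Ring.choose_natCast, neg_neg,
      Units.smul_def, Int.coe_negOnePow_natCast, smul_eq_mul]

theorem subst_sub_one_binomialSeries (u : (MvPowerSeries σ R)ˣ)
    (hu : constantCoeff (u : MvPowerSeries σ R) = 1) (n : ℤ) :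
    (PowerSeries.binomialSeries R n).subst ((u : MvPowerSeries σ R) - 1) = ↑(u ^ n) := by
  have hs : PowerSeries.HasSubst ((u : MvPowerSeries σ R) - 1) :=
    .of_constantCoeff_zero (by simp [hu])
  have hnat (k : ℕ) : (PowerSeries.binomialSeries R (k : ℤ)).subst ((u : MvPowerSeries σ R) - 1) =
      ↑(u ^ k) := by
    rw [PowerSeries.binomialSeries_nat, PowerSeries.subst_pow hs, PowerSeries.subst_add hs,
      PowerSeries.subst_X hs, ← PowerSeries.coe_substAlgHom hs, map_one]
    simp
  obtain ⟨k, rfl | rfl⟩ := n.eq_nat_or_neg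
  · exact_mod_cast hnat k
  · have h := PowerSeries.subst_mul hs (PowerSeries.binomialSeries R (-k : ℤ))
      (PowerSeries.binomialSeries R (k : ℤ))
    rw [← PowerSeries.binomialSeries_add, neg_add_cancel, PowerSeries.binomialSeries_zero, hnat,
      ← PowerSeries.coe_substAlgHom hs, map_one, PowerSeries.coe_substAlgHom hs] at h
    rw [zpow_neg, zpow_natCast, ← Units.mul_eq_one_iff_eq_inv, ← h]

theorem finsum_zbinom_mul_zcoeff (u : (MvPowerSeries σ R)ˣ)
    (hu : constantCoeff (u : MvPowerSeries σ R) = 1) (n : ℤ) (e : σ → ℤ) :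
    ∑ᶠ k : ℕ, (zbinom n k : R) * zcoeff (((u : MvPowerSeries σ R) - 1) ^ k) e =
      zcoeff ↑(u ^ n) e := by
  have hs : PowerSeries.HasSubst ((u : MvPowerSeries σ R) - 1) :=
    .of_constantCoeff_zero (by simp [hu])
  by_cases he : e ∈ Set.range intExp
  · obtain ⟨d, rfl⟩ := he
    simp only [zcoeff_intExp]
    rw [← subst_sub_one_binomialSeries u hu n, PowerSeries.coeff_subst hs]
    refine finsum_congr fun k => ?_
    simp [zbinom_eq_choose]
  · simp [zcoeff_of_notMem_range _ he]

theorem iwzPowNeg_neg_one (G : ℤ → ℤ → R) (a b : ℤ) :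
    iwzPowNeg G (-1) a b = -iwzPow (fun i j => -G i j) (-1) a b := by
  rw [iwzPowNeg, msign, if_neg (by decide), Int.cast_neg, Int.cast_one, neg_one_mul]
  rfl

theorem single_zero_one_eq_vec : (Pi.single 0 1 : Fin 2 → ℤ) = ![1, 0] := by
  ext j
  fin_cases j <;> rfl

theorem single_one_one_eq_vec : (Pi.single 1 1 : Fin 2 → ℤ) = ![0, 1] := by
  ext j
  fin_cases j <;> rfl

theorem vec_add_single_zero (a b n : ℤ) : ![a, b] + Pi.single 0 n = ![a + n, b] := by
  ext j
  fin_cases j <;> simp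

theorem vec_add_single_one (a b n : ℤ) : ![a, b] + Pi.single 1 n = ![a, b + n] := by
  ext j
  fin_cases j <;> simp

namespace IsLeadingVar

variable {C : MvPowerSeries (Fin 2) R}

theorem finsum_zbinom_mul_pow2 {i : Fin 2} (h : IsLeadingVar i C)
    (h1 : zcoeff C (Pi.single i 1) = 1) {f : ℤ → ℤ → R}
    (hf : ∀ a b, f a b = zcoeff C (![a, b] + Pi.single i 1) - oneS2 R a b) (n a b : ℤ) :
    ∑ᶠ k : ℕ, (zbinom n k : R) * pow2 f k a b = h.laurentCoeff n (![a, b] + Pi.single i n) := by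
  let L := (LinearEquiv.finTwoArrow ℤ ℤ).symm.toAddEquiv.trans (chartExp i)
  have hL (a b : ℤ) : L (a, b) = chartExp i ![a, b] := rfl
  have hf' : f = fun a b => zcoeff ((h.strictTransform : MvPowerSeries (Fin 2) R) - 1)
      (L (a, b)) := by
    ext a b
    rw [hf, sub_eq_add_neg _ (1 : MvPowerSeries (Fin 2) R), zcoeff_add, zcoeff_neg, zcoeff_one,
      ← zcoeff_subst_chart i C, ← h.X_mul_strictTransform, zcoeff_X_mul, map_add,
      chartExp_single_self, add_sub_cancel_right, hL, ← sub_eq_add_neg]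
    simp [oneS2]
  have hu := h.constantCoeff_strictTransform.trans h1
  simp only [hf', pow2_zcoeff]
  rw [finsum_zbinom_mul_zcoeff _ hu, laurentCoeff, map_add, chartExp_single_self,
    add_sub_cancel_right, hL]

theorem izwPow_eq_laurentCoeff (h : IsLeadingVar 0 C) (h1 : zcoeff C (Pi.single 0 1) = 1)
    (n a b : ℤ) : izwPow (fun i j => zcoeff C ![i, j]) n a b = h.laurentCoeff n ![a, b] := by
  rw [izwPow, h.finsum_zbinom_mul_pow2 h1 fun a b => by rw [hzS, vec_add_single_zero],
    vec_add_single_zero, sub_add_cancel]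

theorem iwzPow_eq_laurentCoeff (h : IsLeadingVar 1 C) (h1 : zcoeff C (Pi.single 1 1) = 1)
    (n a b : ℤ) : iwzPow (fun i j => zcoeff C ![i, j]) n a b = h.laurentCoeff n ![a, b] := by
  rw [iwzPow, h.finsum_zbinom_mul_pow2 h1 fun a b => by rw [hwS, vec_add_single_one],
    vec_add_single_one, sub_add_cancel]

theorem iwzPowNeg_neg_one_eq_laurentCoeff (h : IsLeadingVar 1 C)
    (h1 : zcoeff C (Pi.single 1 1) = -1) (a b : ℤ) :
    iwzPowNeg (fun i j => zcoeff C ![i, j]) (-1) a b = h.laurentCoeff (-1) ![a, b] := by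
  simp only [iwzPowNeg_neg_one, ← zcoeff_neg]
  rw [h.neg.iwzPow_eq_laurentCoeff (by rw [zcoeff_neg, h1, neg_neg]),
    h.laurentCoeff_neg_one_neg, neg_neg]

end IsLeadingVar

/-! ### Formal group laws -/

/-- The power series in two variables with coefficients `f i j`, `i, j ≥ 0`. Values of `f` at
negative indices are dropped. -/
def ofCoeff2 (f : ℤ → ℤ → R) : MvPowerSeries (Fin 2) R := fun d => f (d 0) (d 1)

theorem zcoeff_ofCoeff2 {f : ℤ → ℤ → R} (hf : ∀ i j, i < 0 ∨ j < 0 → f i j = 0) (i j : ℤ) :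
    zcoeff (ofCoeff2 f) ![i, j] = f i j := by
  by_cases h : i < 0 ∨ j < 0
  · rw [hf i j h]
    rcases h with h | h
    · exact zcoeff_of_neg _ (i := 0) h
    · exact zcoeff_of_neg _ (i := 1) h
  · push Not at h
    obtain ⟨d, hd⟩ := mem_range_intExp (e := ![i, j]).mpr (by simpa [Fin.forall_fin_two] using h)
    rw [← hd, zcoeff_intExp]
    exact congrArg₂ f (congrFun hd 0) (congrFun hd 1)

theorem X_zero_mul_X_one_dvd {P : MvPowerSeries (Fin 2) R} (h0 : ∀ j, zcoeff P ![0, j] = 0)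
    (h1 : ∀ i, zcoeff P ![i, 0] = 0) : X 0 * X 1 ∣ P := by
  obtain ⟨Q, rfl⟩ : X 0 ∣ P := X_dvd_iff.mpr fun d hd => by
    rw [← zcoeff_intExp, ← h0 (d 1)]
    congr 1
    ext j
    fin_cases j <;> simp [hd]
  refine mul_dvd_mul_left _ (X_dvd_iff.mpr fun d hd => ?_)
  rw [← zcoeff_intExp, ← h1 (d 0 + 1), zcoeff_X_mul]
  congr 1
  ext j
  fin_cases j <;> simp [hd]

namespace FormalGroupLaw

variable (𝓕 : FormalGroupLaw R)

/-- The power series `F(z,w)`, whose coefficients `𝓕.F` records as a function on `ℤ × ℤ`. -/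
def series : MvPowerSeries (Fin 2) R := ofCoeff2 𝓕.F

theorem zcoeff_series (i j : ℤ) : zcoeff 𝓕.series ![i, j] = 𝓕.F i j :=
  zcoeff_ofCoeff2 𝓕.F_supp i j

theorem F_zero_left (j : ℤ) : 𝓕.F 0 j = if j = 1 then 1 else 0 := by
  rw [F_comm, F_modw]

theorem zcoeff_series_single (i : Fin 2) : zcoeff 𝓕.series (Pi.single i 1) = 1 := by
  fin_cases i
  · simp [single_zero_one_eq_vec, zcoeff_series, F_modw]
  · simp [single_one_one_eq_vec, zcoeff_series, F_zero_left]

theorem constantCoeff_series : constantCoeff 𝓕.series = 0 :=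
  𝓕.F_modw 0

theorem isLeadingVar_series (i : Fin 2) : IsLeadingVar i 𝓕.series :=
  isLeadingVar_of_isUnit 𝓕.constantCoeff_series (𝓕.zcoeff_series_single i ▸ isUnit_one)

theorem pow2_F (k : ℕ) (a b : ℤ) : pow2 𝓕.F k a b = zcoeff (𝓕.series ^ k) ![a, b] := by
  have h := congrFun₂ (pow2_zcoeff (LinearEquiv.finTwoArrow ℤ ℤ).symm.toAddEquiv 𝓕.series k) a b
  simpa [zcoeff_series] using h

theorem exists_series_eq : ∃ g, 𝓕.series = X 0 + X 1 + X 0 * X 1 * g := by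
  obtain ⟨g, hg⟩ := X_zero_mul_X_one_dvd (P := 𝓕.series + -(X 0 + X 1))
    (fun j => by
      simp [zcoeff_add, zcoeff_neg, zcoeff_X, zcoeff_series, F_zero_left, funext_iff])
    (fun i => by
      simp [zcoeff_add, zcoeff_neg, zcoeff_X, zcoeff_series, F_modw, funext_iff])
  exact ⟨g, by rw [← hg]; ring⟩

theorem subst_swap_series : subst ![X 1, X 0] 𝓕.series = 𝓕.series := by
  refine ext_zcoeff fun e => ?_
  let q := (Equiv.swap (0 : Fin 2) 1).toEmbedding
  have hX : (![X 1, X 0] : Fin 2 → MvPowerSeries (Fin 2) R) = X ∘ q := (comp_eq_vec X q).symm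
  have he : e ∘ q = ![e 1, e 0] := comp_eq_vec e q
  have he' : e = ![e 0, e 1] := comp_eq_vec e id
  rw [hX, ← rename_eq_subst, zcoeff_rename q _ fun t ht => absurd ⟨q t, by simp [q]⟩ ht, he,
    zcoeff_series, F_comm, ← zcoeff_series, ← he']

/-- The inverse power series `ι(z)`, whose coefficients `𝓕.inv` records as a function on `ℤ`. -/
def invSeries : PowerSeries R := PowerSeries.mk fun n => 𝓕.inv n

theorem zcoeff_invSeries (n : ℤ) : zcoeff 𝓕.invSeries (fun _ => n) = 𝓕.inv n := by
  by_cases h : n < 0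
  · rw [zcoeff_of_neg _ (i := ()) h, 𝓕.inv_supp n (by omega)]
  · obtain ⟨m, rfl⟩ := Int.eq_ofNat_of_zero_le (not_lt.mp h)
    rw [show (fun _ => (m : ℤ)) = intExp (Finsupp.single () m) by ext; simp, zcoeff_intExp]
    exact PowerSeries.coeff_mk _ _

theorem constantCoeff_invSeries : constantCoeff 𝓕.invSeries = 0 := by
  rw [← zcoeff_zero_right]
  exact (𝓕.zcoeff_invSeries 0).trans (𝓕.inv_supp 0 (by norm_num))

theorem pow1_inv (k : ℕ) (a : ℤ) : pow1 𝓕.inv k a = zcoeff (𝓕.invSeries ^ k) fun _ => a := by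
  simpa only [zcoeff_invSeries] using congrFun (pow1_zcoeff 𝓕.invSeries k) a

theorem hasSubst_X_invSeries : HasSubst ![PowerSeries.X, 𝓕.invSeries] :=
  hasSubst_of_constantCoeff_zero fun j => by
    fin_cases j
    exacts [constantCoeff_X _, 𝓕.constantCoeff_invSeries]

theorem subst_X_invSeries :
    (subst ![PowerSeries.X, 𝓕.invSeries] 𝓕.series : PowerSeries R) = 0 := by
  refine ext_zcoeff fun e => ?_
  have hinj : Function.Injective fun d : Fin 2 →₀ ℕ => ((d 0 : ℤ), d 1) := fun d d' h => by
    ext j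
    fin_cases j <;> simp_all
  rw [zcoeff_zero_left, ← 𝓕.inv_eq (e ()), ← one_mul (subst _ _),
    zcoeff_mul_subst 𝓕.hasSubst_X_invSeries, finsum_eq_finsum_comp hinj]
  · refine finsum_congr fun d => congrArg (𝓕.F (d 0) (d 1) * ·) ?_
    rw [one_mul, Fin.prod_univ_two, pow1_inv]
    refine (zcoeff_X_pow_mul () (d 0) (𝓕.invSeries ^ d 1) e).trans (congrArg _ ?_)
    ext
    simp
  · rintro ⟨i, n⟩ hi
    rw [𝓕.F_supp _ _ (.inl _), zero_mul]
    by_contra h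
    exact hi ⟨Finsupp.equivFunOnFinite.symm ![i.toNat, n], by simpa using h⟩

theorem subst_pair_comm {f g : MvPowerSeries τ R} (h : HasSubst ![f, g]) :
    subst ![f, g] 𝓕.series = subst ![g, f] 𝓕.series := by
  nth_rw 1 [← 𝓕.subst_swap_series]
  rw [subst_comp_subst_apply HasSubst.X_X h]
  congr! 2 with j
  fin_cases j <;> simp [subst_X h]

theorem zcoeff_subst_X_subst_X_X {p : Fin 3} {q : Fin 2 ↪ Fin 3} (hp : Set.range q = {p}ᶜ)
    (e : Fin 3 → ℤ) :
    zcoeff (subst ![X p, subst ![X (q 0), X (q 1)] 𝓕.series] 𝓕.series) e =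
      ∑ᶠ n : ℕ, 𝓕.F (e p) n * pow2 𝓕.F n (e (q 0)) (e (q 1)) := by
  rw [← comp_eq_vec, ← rename_eq_subst, zcoeff_subst_X_rename hp 𝓕.constantCoeff_series]
  simp only [comp_eq_vec, zcoeff_series, pow2_F]

/-- The associated formal group of Mathlib. Its points are power series under the addition
`x, y ↦ F(x, y)`, which turns identities between compositions of `F` and `ι` into identities in an
abelian group. -/
def toFormalGroup : FormalGroup R where
  toPowerSeries := 𝓕.series
  zero_constantCoeff := 𝓕.constantCoeff_series
  lin_coeff_X := by
    rw [← zcoeff_intExp, intExp_single, Nat.cast_one, zcoeff_series_single]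
  lin_coeff_Y := by
    rw [← zcoeff_intExp, intExp_single, Nat.cast_one, zcoeff_series_single]
  assoc := by
    refine ext_zcoeff fun e => ?_
    have h := 𝓕.zcoeff_subst_X_subst_X_X (p := 2) (q := ⟨![0, 1], by decide⟩) (by
      ext j
      fin_cases j <;> simp) e
    have h' := 𝓕.zcoeff_subst_X_subst_X_X (p := 0) (q := ⟨![1, 2], by decide⟩) (by
      ext j
      fin_cases j <;> simp) e
    rw [𝓕.subst_pair_comm (HasSubst.cons_subst_zero_left (0 : Fin 3) 1 2 𝓕.constantCoeff_series)]
    refine h.trans (.trans ?_ h'.symm)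
    simp only [𝓕.F_comm (e 2)]
    exact 𝓕.F_assoc _ _ _

instance : 𝓕.toFormalGroup.IsComm := ⟨𝓕.subst_swap_series.symm⟩

instance : Neg (𝓕.toFormalGroup.Point σ) where
  neg x := ⟨PowerSeries.subst x.val 𝓕.invSeries,
    IsNilpotent_subst (PowerSeries.HasSubst.const x.prop)
      (𝓕.constantCoeff_invSeries ▸ IsNilpotent.zero)⟩

instance : AddCommGroup (𝓕.toFormalGroup.Point σ) where
  add_comm := add_comm
  zsmul := zsmulRec
  neg_add_cancel x := by
    have hx : HasSubst fun _ : Unit => x.val := PowerSeries.HasSubst.const x.prop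
    have h := congrArg (subst fun _ : Unit => x.val) 𝓕.subst_X_invSeries
    rw [subst_comp_subst_apply 𝓕.hasSubst_X_invSeries hx, ← coe_substAlgHom (R := R) hx, map_zero,
      coe_substAlgHom] at h
    rw [add_comm]
    refine Subtype.ext (.trans ?_ h)
    change subst _ 𝓕.series = _
    congr! 2 with j
    fin_cases j
    exacts [(subst_X hx ()).symm, rfl]

/-- The power series `F(z,ι(w))`, whose inverse is expanded in the `F`-delta distribution. -/
def diffSeries : MvPowerSeries (Fin 2) R :=
  subst ![X 0, PowerSeries.subst (X 1 : MvPowerSeries (Fin 2) R) 𝓕.invSeries] 𝓕.series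

theorem zcoeff_diffSeries (i j : ℤ) : zcoeff 𝓕.diffSeries ![i, j] = 𝓕.Fzi i j := by
  let q : Unit ↪ Fin 2 := ⟨fun _ => 1, fun _ _ _ => rfl⟩
  have hq : Set.range q = {0}ᶜ := by
    ext j
    fin_cases j
    · exact iff_of_false (fun ⟨_, h⟩ => one_ne_zero h) fun h => h rfl
    · exact iff_of_true ⟨(), rfl⟩ one_ne_zero
  have h := zcoeff_subst_X_rename hq 𝓕.constantCoeff_invSeries 𝓕.series ![i, j]
  rw [rename_eq_subst] at h
  refine h.trans (finsum_congr fun n => ?_)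
  rw [pow1_inv, ← zcoeff_series]
  rfl

theorem Fzi_eq_zcoeff : 𝓕.Fzi = fun i j => zcoeff 𝓕.diffSeries ![i, j] :=
  funext₂ fun i j => (𝓕.zcoeff_diffSeries i j).symm

theorem Fzi_zero_left (j : ℤ) : 𝓕.Fzi 0 j = 𝓕.inv j := by
  rw [Fzi, finsum_eq_single _ 1]
  · simp [F_zero_left, pow1_inv, zcoeff_invSeries]
  · intro m hm
    rw [F_zero_left, if_neg (by exact_mod_cast hm), zero_mul]

theorem Fzi_one_zero : 𝓕.Fzi 1 0 = 1 := by
  rw [Fzi, finsum_eq_single _ 0]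
  · simp [F_modw, pow1, oneS]
  · intro m hm
    rw [pow1_inv]
    refine mul_eq_zero_of_right _ ((zcoeff_zero_right _).trans ?_)
    rw [map_pow, constantCoeff_invSeries, zero_pow hm]

theorem constantCoeff_diffSeries : constantCoeff 𝓕.diffSeries = 0 := by
  have h0 : (0 : Fin 2 → ℤ) = ![0, 0] := comp_eq_vec 0 id
  rw [← zcoeff_zero_right, h0, zcoeff_diffSeries, Fzi_zero_left, 𝓕.inv_supp 0 zero_lt_one]

theorem zcoeff_diffSeries_single_zero : zcoeff 𝓕.diffSeries (Pi.single 0 1) = 1 := by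
  rw [single_zero_one_eq_vec, zcoeff_diffSeries, Fzi_one_zero]

theorem zcoeff_diffSeries_single_one : zcoeff 𝓕.diffSeries (Pi.single 1 1) = -1 := by
  rw [single_one_one_eq_vec, zcoeff_diffSeries, Fzi_zero_left, inv_one]

theorem isLeadingVar_diffSeries (i : Fin 2) : IsLeadingVar i 𝓕.diffSeries := by
  refine isLeadingVar_of_isUnit 𝓕.constantCoeff_diffSeries ?_
  fin_cases i
  exacts [𝓕.zcoeff_diffSeries_single_zero ▸ isUnit_one,
    𝓕.zcoeff_diffSeries_single_one ▸ isUnit_one.neg]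

theorem izwPow_Fzi (n a b : ℤ) :
    izwPow 𝓕.Fzi n a b = (𝓕.isLeadingVar_diffSeries 0).laurentCoeff n ![a, b] := by
  rw [Fzi_eq_zcoeff, (𝓕.isLeadingVar_diffSeries 0).izwPow_eq_laurentCoeff
    𝓕.zcoeff_diffSeries_single_zero]

theorem iwzPow_F (n a b : ℤ) :
    iwzPow 𝓕.F n a b = (𝓕.isLeadingVar_series 1).laurentCoeff n ![a, b] := by
  simp only [← (𝓕.isLeadingVar_series 1).iwzPow_eq_laurentCoeff (𝓕.zcoeff_series_single 1),
    zcoeff_series]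

theorem delta_eq_laurentCoeff_sub (a b : ℤ) :
    𝓕.delta a b = (𝓕.isLeadingVar_diffSeries 0).laurentCoeff (-1) ![a, b] -
      (𝓕.isLeadingVar_diffSeries 1).laurentCoeff (-1) ![a, b] := by
  rw [delta, izwPow_Fzi, Fzi_eq_zcoeff,
    (𝓕.isLeadingVar_diffSeries 1).iwzPowNeg_neg_one_eq_laurentCoeff 𝓕.zcoeff_diffSeries_single_one]

theorem finsum_delta_mul_laurentCoeff [Fintype τ] [DecidableEq τ] {p : τ} {q : Fin 2 ↪ τ}
    (hp : Set.range q = {p}ᶜ) {C : MvPowerSeries (Fin 2) R} {l : Fin 2} (hC : IsLeadingVar l C) :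
    ∃ (h : IsLeadingVar p (subst ![X p, rename q C] 𝓕.diffSeries))
      (h' : IsLeadingVar (q l) (subst ![X p, rename q C] 𝓕.diffSeries)),
      ∀ e, ∑ᶠ m, 𝓕.delta (e p) m * hC.laurentCoeff m (e ∘ q) =
        h.laurentCoeff (-1) e - h'.laurentCoeff (-1) e := by
  obtain ⟨h, hh⟩ :=
    IsLeadingVar.exists_laurentCoeff_subst_rename_zero hp (𝓕.isLeadingVar_diffSeries 0) hC
  obtain ⟨h', hh'⟩ :=
    IsLeadingVar.exists_laurentCoeff_subst_rename_one hp (𝓕.isLeadingVar_diffSeries 1) hC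
  refine ⟨h, h', fun e => ?_⟩
  simp only [delta_eq_laurentCoeff_sub, sub_mul, hh, hh']
  exact finsum_sub_distrib (IsLeadingVar.finite_support_laurentCoeff_mul _ hC _ _ _)
    (IsLeadingVar.finite_support_laurentCoeff_mul _ hC _ _ _)

/-- The variable `z_i` as a point of the associated formal group. -/
def coord (i : σ) : 𝓕.toFormalGroup.Point σ := ⟨X i, PowerSeries.HasSubst.X i⟩

theorem sub_val (x y : 𝓕.toFormalGroup.Point σ) :
    (x - y).val = subst ![x.val, y.val] 𝓕.diffSeries := by
  have hs : HasSubst ![x.val, y.val] :=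
    hasSubst_of_constantCoeff_nilpotent (by simp [x.prop, y.prop])
  have hX : HasSubst fun _ : Unit => (X 1 : MvPowerSeries (Fin 2) R) :=
    hasSubst_of_constantCoeff_zero (by simp)
  have hd : HasSubst ![X 0, PowerSeries.subst (X 1 : MvPowerSeries (Fin 2) R) 𝓕.invSeries] :=
    hasSubst_of_constantCoeff_nilpotent fun j => by
      fin_cases j
      exacts [(𝓕.coord (0 : Fin 2)).prop, (-𝓕.coord (1 : Fin 2)).prop]
  rw [sub_eq_add_neg, diffSeries, subst_comp_subst_apply hd hs]
  change subst _ 𝓕.series = _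
  congr! 2 with j
  fin_cases j
  · exact (subst_X hs 0).symm
  · refine .trans ?_ (subst_comp_subst_apply hX hs _).symm
    simp only [subst_X hs]
    rfl

theorem exists_val_add_val_eq_mul {x y : 𝓕.toFormalGroup.Point σ} (h : x + y = 0) :
    ∃ T, x.val + y.val = x.val * (y.val * T) := by
  obtain ⟨g, hg⟩ := 𝓕.exists_series_eq
  have hs : HasSubst ![x.val, y.val] :=
    hasSubst_of_constantCoeff_nilpotent (by simp [x.prop, y.prop])
  have h0 : subst ![x.val, y.val] 𝓕.series = 0 := congrArg Subtype.val h
  rw [hg, subst_add hs, subst_add hs, subst_mul hs, subst_mul hs, subst_X hs, subst_X hs] at h0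
  simp only [Matrix.cons_val_zero, Matrix.cons_val_one, Matrix.cons_val_fin_one] at h0
  exact ⟨-subst ![x.val, y.val] g, by linear_combination h0⟩

theorem coord_add_coord_val (q : Fin 2 ↪ σ) :
    (𝓕.coord (q 0) + 𝓕.coord (q 1)).val = rename q 𝓕.series := by
  rw [rename_eq_subst, comp_eq_vec]
  rfl

theorem coord_sub_coord_val (q : Fin 2 ↪ σ) :
    (𝓕.coord (q 0) - 𝓕.coord (q 1)).val = rename q 𝓕.diffSeries := by
  rw [rename_eq_subst, comp_eq_vec, sub_val]
  rfl

theorem exists_add_eq_mul (q q' : Fin 2 ↪ σ) (hq : q 1 = q' 0) :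
    ∃ T, subst ![X (q' 1), rename q 𝓕.diffSeries] 𝓕.diffSeries +
        subst ![X (q 0), rename q' 𝓕.series] 𝓕.diffSeries =
      subst ![X (q' 1), rename q 𝓕.diffSeries] 𝓕.diffSeries *
        (subst ![X (q 0), rename q' 𝓕.series] 𝓕.diffSeries * T) := by
  have h : (𝓕.coord (q' 1) - (𝓕.coord (q 0) - 𝓕.coord (q 1))) +
      (𝓕.coord (q 0) - (𝓕.coord (q' 0) + 𝓕.coord (q' 1))) = 0 := by
    rw [hq]
    abel
  have hT := 𝓕.exists_val_add_val_eq_mul h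
  rw [sub_val, coord_sub_coord_val, sub_val, coord_add_coord_val] at hT
  exact hT

end FormalGroupLaw

end

/-- `i_{z1,z0} z2⁻¹δ_F(F(z1,ιz0)/z2) = i_{z2,z0} z1⁻¹δ_F(F(z0,z2)/z1)`,
coefficient of `z0^e0 z1^e1 z2^e2` (the first substitution expands powers of `F(z1,ιz0)`
in `R((z1))⟦z0⟧`, the second expands powers of `F(z0,z2)` in `R((z2))⟦z0⟧`). -/
theorem deltaF_swap (R : Type*) [CommRing R] (𝓕 : FormalGroupLaw R) (e0 e1 e2 : ℤ) :
    (∑ᶠ m : ℤ, 𝓕.delta e2 m * izwPow 𝓕.Fzi m e1 e0)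
      = ∑ᶠ m : ℤ, 𝓕.delta e1 m * iwzPow 𝓕.F m e0 e2 := by
  let q : Fin 2 ↪ Fin 3 := ⟨![1, 0], by decide⟩
  let q' : Fin 2 ↪ Fin 3 := ⟨![0, 2], by decide⟩
  let e := ![e0, e1, e2]
  have hq : Set.range q = {2}ᶜ := by
    ext j
    fin_cases j <;> simp [q]
  have hq' : Set.range q' = {1}ᶜ := by
    ext j
    fin_cases j <;> simp [q']
  have he : ![e1, e0] = e ∘ q := (comp_eq_vec e q).symm
  have he' : ![e0, e2] = e ∘ q' := (comp_eq_vec e q').symm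
  obtain ⟨hH2, hH1, hl⟩ := 𝓕.finsum_delta_mul_laurentCoeff hq (𝓕.isLeadingVar_diffSeries 0)
  obtain ⟨hK1, hK2, hr⟩ := 𝓕.finsum_delta_mul_laurentCoeff hq' (𝓕.isLeadingVar_series 1)
  obtain ⟨T, hT⟩ := 𝓕.exists_add_eq_mul q q' rfl
  have h1 := IsLeadingVar.laurentCoeff_neg_one_add hH1 hK1 hT e
  have h2 := IsLeadingVar.laurentCoeff_neg_one_add hH2 hK2 hT e
  simp only [𝓕.izwPow_Fzi, 𝓕.iwzPow_F, he, he']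
  calc _ = hH2.laurentCoeff (-1) e - hH1.laurentCoeff (-1) e := hl e
    _ = hK1.laurentCoeff (-1) e - hK2.laurentCoeff (-1) e :=
        sub_eq_sub_iff_add_eq_add.mpr (h2.trans (h1.symm.trans (add_comm _ _)))
    _ = _ := (hr e).symm
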